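/- A₁₃ divides f₁₃(x₁) − f₁₃^σ(x₂) in K[x₁,x₂], and moreover A₁₃(x₂,x₁) = A₁₃^σ(x₁,x₂). -/

import Mathlib

/-!
The divisibility rests on an explicit quotient of degree 9 in `x₁, x₂`. Since `A₁₃` is monic of
degree 4 in `x₁`, dividing `13 (f₁₃(x₁) − f₁₃^σ(x₂))` by it produces a quotient whose coefficients
are integral combinations of `1, β, α, αβ`, and the remainder is zero.

The product `A₁₃ * quotient` is verified by coordinates with respect to `1, β, α, αβ`, working modulo
`β² = 5β − 3` and `α² = (2 − β)α − β`. The multiplication table of this basis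
(`comb_mul_comb`) reduces the claim to four identities in `ℤ[t, x, y]`
(`coord_one`, `coord_β`, `coord_α`, `coord_αβ`), free of `α` and `β`. The coordinates of
`f₁₃^σ` come from those of `f₁₃` by the substitution `α ↦ 2 − β − α` (`comb_conj`).
Finally `13` is a unit, because `K` has characteristic zero.

The symmetry `A₁₃(x₂,x₁) = A₁₃^σ(x₁,x₂)` is linear in `α` and follows by comparing
coefficients modulo `β² = 5β − 3`.
-/

open Polynomial in
/-- The polynomial `f₁₃` of Cassou-Noguès and Couveignes (degree 13 family). -/
noncomputable def f₁₃ {K : Type*} [Field K] (β α t : K) : Polynomial K :=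
  C (1/13 : K) * X ^ 13
    + C (((9*β - 39)*α - 6*β + 24) * t) * X ^ 11
    + C (((9*β - 39)*α - 12*β + 51) * t) * X ^ 10
    + C (((-174*β + 753)*α + (519*β - 2217)) * t^2) * X ^ 9
    + C (((1620*β - 6966)*α - 36*β + 162) * t^2) * X ^ 8
    + C (((-29781*β + 128115)*α + (11988*β - 51651)) * t^3
        + ((1638*β - 7047)*α - 1305*β + 5616) * t^2) * X ^ 7
    + C (((-147933*β + 636498)*α + (135999*β - 585198)) * t^3) * X ^ 6
    + C (((503631*β - 2166939)*α - 585387*β + 2518938) * t^4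
        + ((-18036*β + 77598)*α + (119934*β - 516051)) * t^3) * X ^ 5
    + C (((-1130922*β + 4866156)*α - 1672488*β + 7196364) * t^4
        + ((71604*β - 308097)*α - 37719*β + 162297) * t^3) * X ^ 4
    + C (((1827441*β - 7863156)*α + (2618325*β - 11266209)) * t^5
        + ((-8005635*β + 34446465)*α + (3453192*β - 14858316)) * t^4) * X ^ 3
    + C (((50157306*β - 215815671)*α - 31620618*β + 136056429) * t^5
        + ((-3343518*β + 14386410)*α + (3744792*β - 16113006)) * t^4) * X ^ 2
    + C (((-27171504*β + 116912916)*α + (11138796*β - 47927700)) * t^6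
        + ((73616121*β - 316753659)*α - 96852267*β + 416733579) * t^5
        + ((770472*β - 3315168)*α - 303912*β + 1307664) * t^4) * X
    + C (((-48359916*β + 208081872)*α - 48359916*β) * t^6
        + ((-13260672*β + 57057696)*α - 13260672*β) * t^5)

open MvPolynomial in
/-- The factor `A₁₃(x₁,x₂)` of `f₁₃(x₁) − f₁₃^σ(x₂)`. -/
noncomputable def A₁₃ {K : Type*} [Field K] (β α t : K) : MvPolynomial (Fin 2) K :=
  X 0 ^ 4 + X 1 ^ 4 + C (β - 3) * X 0 ^ 2 * X 1 ^ 2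
    - C (9*(3*β - 14) * t) * (X 0 * X 1) + C (12*(47*β - 202) * t^2)
    - C ((β - 4)*α + 2) * X 0 ^ 3 * X 1
    + C ((β - 4)*α - β + 3) * X 0 * X 1 ^ 3
    + C (3*((17*β - 73)*α - 12*β + 50) * t) * X 0 ^ 2
    - C (3*((17*β - 73)*α - 10*β + 45) * t) * X 1 ^ 2
    + C (3*((5*β - 22)*α - 9*β + 38) * t) * X 0
    - C (3*((5*β - 22)*α + 2*β - 9) * t) * X 1

namespace Cofactor

variable {R : Type*} [CommRing R]

/-! ### Coordinates of the polynomials -/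

/-- The element with coordinates `p, q, r, s` with respect to `1, β, α, αβ`. -/
def comb (β α p q r s : R) : R := p + q * β + r * α + s * (α * β)

/-- The `1`-coordinate of `A₁₃`. -/
def aOne (t x y : R) : R :=
  x^4 - 2*x^3*y - 3*x^2*y^2 + 150*t*x^2 + 3*x*y^3 + 126*t*x*y + y^4 - 135*t*y^2 - 2424*t^2
    + 114*t*x + 27*t*y

/-- The `β`-coordinate of `A₁₃`. -/
def aβ (t x y : R) : R :=
  x^2*y^2 - 36*t*x^2 - x*y^3 - 27*t*x*y + 30*t*y^2 + 564*t^2 - 27*t*x - 6*t*y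

/-- The `α`-coordinate of `A₁₃`. -/
def aα (t x y : R) : R :=
  4*x^3*y - 219*t*x^2 - 4*x*y^3 + 219*t*y^2 - 66*t*x + 66*t*y

/-- The `αβ`-coordinate of `A₁₃`. -/
def aαβ (t x y : R) : R :=
  -x^3*y + 51*t*x^2 + x*y^3 - 51*t*y^2 + 15*t*x - 15*t*y

/-- The `1`-coordinate of `13` times the quotient of `f₁₃(x) − f₁₃^σ(y)` by `A₁₃(x,y)`. -/
def qOne (t x y : R) : R :=
  x^9 + 2*x^8*y - 2*x^7*y^2 + 162*t*x^7 + 2*x^6*y^3 - 264*t*x^6*y - 3*x^5*y^4 + 51*t*x^5*y^2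
    - 9225*t^2*x^5 + x^4*y^5 - 279*t*x^4*y^3 + 141*t^2*x^4*y + x^3*y^6 + 45*t*x^3*y^4
    - 5817*t^2*x^3*y^2 + 43902*t^3*x^3 - 21*t*x^2*y^5 + 1431*t^2*x^2*y^3 + 10215*t^3*x^2*y
    + 3*x*y^8 + 99*t*x*y^6 - 6723*t^2*x*y^4 + 65205*t^3*x*y^2 + 306774*t^4*x - y^9 + 216*t*y^7
    + 1509*t^2*y^5 - 128088*t^3*y^3 + 668187*t^4*y + 549*t*x^6 - 21*t*x^5*y - 354*t*x^4*y^2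
    - 13743*t^2*x^4 + 459*t*x^3*y^3 - 53694*t^2*x^3*y - 495*t*x^2*y^4 + 8748*t^2*x^2*y^2
    - 931905*t^3*x^2 + 852*t*x*y^5 - 43038*t^2*x*y^3 + 126369*t^3*x*y + 27*t*y^6 + 46332*t^2*y^4
    - 836784*t^3*y^2 + 1735344*t^4 + 37962*t^2*x^3 - 44559*t^2*x^2*y + 22194*t^2*x*y^2
    - 2637198*t^3*x + 28620*t^2*y^3 + 96390*t^3*y + 475848*t^3

/-- The `β`-coordinate of `13` times the quotient of `f₁₃(x) − f₁₃^σ(y)` by `A₁₃(x,y)`. -/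
def qβ (t x y : R) : R :=
  x^7*y^2 - 42*t*x^7 + 54*t*x^6*y + x^5*y^4 - 18*t*x^5*y^2 + 2169*t^2*x^5 + 60*t*x^4*y^3
    + 6*t^2*x^4*y - 15*t*x^3*y^4 + 1383*t^2*x^3*y^2 - 10260*t^3*x^3 + 3*t*x^2*y^5
    - 315*t^2*x^2*y^3 - 2448*t^3*x^2*y - x*y^8 - 21*t*x*y^6 + 1566*t^2*x*y^4 - 15201*t^3*x*y^2
    - 71253*t^4*x - 48*t*y^7 - 354*t^2*y^5 + 29754*t^3*y^3 - 155259*t^4*y - 129*t*x^6 + 3*t*x^5*y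
    + 81*t*x^4*y^2 + 3204*t^2*x^4 - 108*t*x^3*y^3 + 12492*t^2*x^3*y + 114*t*x^2*y^4
    - 2025*t^2*x^2*y^2 + 216567*t^3*x^2 - 198*t*x*y^5 + 10008*t^2*x*y^3 - 29394*t^3*x*y - 6*t*y^6
    - 10764*t^2*y^4 + 194454*t^3*y^2 - 403299*t^4 - 8820*t^2*x^3 + 10359*t^2*x^2*y
    - 5157*t^2*x*y^2 + 612900*t^3*x - 6651*t^2*y^3 - 22410*t^3*y - 110592*t^3

/-- The `α`-coordinate of `13` times the quotient of `f₁₃(x) − f₁₃^σ(y)` by `A₁₃(x,y)`. -/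
def qα (t x y : R) : R :=
  -4*x^8*y + x^7*y^2 - 288*t*x^7 - 3*x^6*y^3 + 132*t*x^6*y + x^5*y^4 - 15*t*x^5*y^2 + 5901*t^2*x^5
    + x^4*y^5 + 189*t*x^4*y^3 + 5010*t^2*x^4*y - 3*x^3*y^6 + 189*t*x^3*y^4 + 3318*t^2*x^3*y^2
    + 64692*t^3*x^3 + x^2*y^7 - 15*t*x^2*y^5 + 3318*t^2*x^2*y^3 - 57771*t^3*x^2*y - 4*x*y^8
    + 132*t*x*y^6 + 5010*t^2*x*y^4 - 57771*t^3*x*y^2 - 748449*t^4*x - 288*t*y^7 + 5901*t^2*y^5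
    + 64692*t^3*y^3 - 748449*t^4*y - 441*t*x^6 - 636*t*x^5*y + 654*t*x^4*y^2 - 25029*t^2*x^4
    - 702*t*x^3*y^3 + 74232*t^2*x^3*y + 654*t*x^2*y^4 - 13446*t^2*x^2*y^2 + 1357668*t^3*x^2
    - 636*t*x*y^5 + 74232*t^2*x*y^3 - 193950*t^3*x*y - 441*t*y^6 - 25029*t^2*y^4 + 1357668*t^3*y^2
    - 2664090*t^4 - 51111*t^2*x^3 + 17163*t^2*x^2*y + 17163*t^2*x*y^2 + 1950318*t^3*x
    - 51111*t^2*y^3 + 1950318*t^3*y - 730512*t^3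

/-- The `αβ`-coordinate of `13` times the quotient of `f₁₃(x) − f₁₃^σ(y)` by `A₁₃(x,y)`. -/
def qαβ (t x y : R) : R :=
  x^8*y + 66*t*x^7 + x^6*y^3 - 33*t*x^6*y - 1362*t^2*x^5 - 48*t*x^4*y^3 - 1146*t^2*x^4*y + x^3*y^6
    - 48*t*x^3*y^4 - 750*t^2*x^3*y^2 - 15066*t^3*x^3 - 750*t^2*x^2*y^3 + 13374*t^3*x^2*y + x*y^8
    - 33*t*x*y^6 - 1146*t^2*x*y^4 + 13374*t^3*x*y^2 + 173979*t^4*x + 66*t*y^7 - 1362*t^2*y^5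
    - 15066*t^3*y^3 + 173979*t^4*y + 102*t*x^6 + 147*t*x^5*y - 153*t*x^4*y^2 + 5823*t^2*x^4
    + 162*t*x^3*y^3 - 17244*t^2*x^3*y - 153*t*x^2*y^4 + 3132*t^2*x^2*y^2 - 315549*t^3*x^2
    + 147*t*x*y^5 - 17244*t^2*x*y^3 + 45054*t^3*x*y + 102*t*y^6 + 5823*t^2*y^4 - 315549*t^3*y^2
    + 619164*t^4 + 11880*t^2*x^3 - 3987*t^2*x^2*y - 3987*t^2*x*y^2 - 453276*t^3*x + 11880*t^2*y^3
    - 453276*t^3*y + 169776*t^3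

/-- The `1`-coordinate of `f₁₃(x) − x¹³/13`. -/
def fOne (t x : R) : R :=
  24*t*x^11 - 2217*t^2*x^9 - 51651*t^3*x^7 + 2518938*t^4*x^5 - 11266209*t^5*x^3 - 47927700*t^6*x
    + 51*t*x^10 + 162*t^2*x^8 - 585198*t^3*x^6 + 7196364*t^4*x^4 + 136056429*t^5*x^2
    + 5616*t^2*x^7 - 516051*t^3*x^5 - 14858316*t^4*x^3 + 416733579*t^5*x + 162297*t^3*x^4
    - 16113006*t^4*x^2 + 1307664*t^4*x

/-- The `β`-coordinate of `f₁₃(x) − x¹³/13`. -/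
def fβ (t x : R) : R :=
  -6*t*x^11 + 519*t^2*x^9 + 11988*t^3*x^7 - 585387*t^4*x^5 + 2618325*t^5*x^3 + 11138796*t^6*x
    - 12*t*x^10 - 36*t^2*x^8 + 135999*t^3*x^6 - 1672488*t^4*x^4 - 31620618*t^5*x^2 - 48359916*t^6
    - 1305*t^2*x^7 + 119934*t^3*x^5 + 3453192*t^4*x^3 - 96852267*t^5*x - 37719*t^3*x^4
    + 3744792*t^4*x^2 - 13260672*t^5 - 303912*t^4*x

/-- The `α`-coordinate of `f₁₃(x) − x¹³/13`. -/
def fα (t x : R) : R :=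
  -39*t*x^11 + 753*t^2*x^9 + 128115*t^3*x^7 - 2166939*t^4*x^5 - 7863156*t^5*x^3 + 116912916*t^6*x
    - 39*t*x^10 - 6966*t^2*x^8 + 636498*t^3*x^6 + 4866156*t^4*x^4 - 215815671*t^5*x^2
    + 208081872*t^6 - 7047*t^2*x^7 + 77598*t^3*x^5 + 34446465*t^4*x^3 - 316753659*t^5*x
    - 308097*t^3*x^4 + 14386410*t^4*x^2 + 57057696*t^5 - 3315168*t^4*x

/-- The `αβ`-coordinate of `f₁₃(x) − x¹³/13`. -/
def fαβ (t x : R) : R :=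
  9*t*x^11 - 174*t^2*x^9 - 29781*t^3*x^7 + 503631*t^4*x^5 + 1827441*t^5*x^3 - 27171504*t^6*x
    + 9*t*x^10 + 1620*t^2*x^8 - 147933*t^3*x^6 - 1130922*t^4*x^4 + 50157306*t^5*x^2 - 48359916*t^6
    + 1638*t^2*x^7 - 18036*t^3*x^5 - 8005635*t^4*x^3 + 73616121*t^5*x + 71604*t^3*x^4
    - 3343518*t^4*x^2 - 13260672*t^5 + 770472*t^4*x

/-! ### Arithmetic in coordinates -/

/-- Multiplication with respect to `1, β, α, αβ`. -/
theorem comb_mul_comb {β α : R} (hβ : β^2 - 5*β + 3 = 0) (hα : α^2 + (β - 2)*α + β = 0)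
    (p q r s p' q' r' s' : R) :
    comb β α p q r s * comb β α p' q' r' s' =
      comb β α
        (p*p' - 3*q*q' + 3*(r*s' + s*r') + 15*s*s')
        (p*q' + q*p' + 5*q*q' - r*r' - 5*(r*s' + s*r') - 22*s*s')
        (p*r' + r*p' - 3*(q*s' + s*q') + 2*r*r' + 3*(r*s' + s*r') + 9*s*s')
        (p*s' + q*r' + r*q' + s*p' + 5*(q*s' + s*q') - r*r' - 3*(r*s' + s*r') - 12*s*s') := by
  unfold comb
  linear_combination
    (r*r' + (r*s' + s*r')*β + s*s'*β^2) * hα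
      + (q*q' + (q*s' + s*q')*α - (r*s' + s*r')*(α + 1) - s*s'*(α*(β + 3) + β + 5)) * hβ

/-- Coordinates of the image under the conjugation `α ↦ 2 − β − α`. -/
theorem comb_conj {β : R} (hβ : β^2 - 5*β + 3 = 0) (α p q r s : R) :
    comb β (2 - β - α) p q r s =
      comb β α (p + 2*r + 3*s) (q - r - 3*s) (-r) (-s) := by
  unfold comb
  linear_combination (-s) * hβ

/-! ### The explicit factorization -/

/-- The `1`-coordinate of the factorization; the correction terms in `y` come from `comb_conj`. -/
theorem coord_one (t x y : R) :
    aOne t x y * qOne t x y - 3*(aβ t x y * qβ t x y)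
      + 3*(aα t x y * qαβ t x y + aαβ t x y * qα t x y)
      + 15*(aαβ t x y * qαβ t x y) =
    x^13 - y^13 + 13*(fOne t x - (fOne t y + 2*fα t y + 3*fαβ t y)) := by
  simp only [aOne, aβ, aα, aαβ, qOne, qβ, qα, qαβ, fOne, fα, fαβ]
  ring

theorem coord_β (t x y : R) :
    aOne t x y * qβ t x y + aβ t x y * qOne t x y + 5*(aβ t x y * qβ t x y)
      - aα t x y * qα t x y - 5*(aα t x y * qαβ t x y + aαβ t x y * qα t x y)
      - 22*(aαβ t x y * qαβ t x y) =
    13*(fβ t x - (fβ t y - fα t y - 3*fαβ t y)) := by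
  simp only [aOne, aβ, aα, aαβ, qOne, qβ, qα, qαβ, fβ, fα, fαβ]
  ring

theorem coord_α (t x y : R) :
    aOne t x y * qα t x y + aα t x y * qOne t x y
      - 3*(aβ t x y * qαβ t x y + aαβ t x y * qβ t x y) + 2*(aα t x y * qα t x y)
      + 3*(aα t x y * qαβ t x y + aαβ t x y * qα t x y)
      + 9*(aαβ t x y * qαβ t x y) =
    13*(fα t x + fα t y) := by
  simp only [aOne, aβ, aα, aαβ, qOne, qβ, qα, qαβ, fα]
  ring

theorem coord_αβ (t x y : R) :
    aOne t x y * qαβ t x y + aβ t x y * qα t x y + aα t x y * qβ t x y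
      + aαβ t x y * qOne t x y + 5*(aβ t x y * qαβ t x y + aαβ t x y * qβ t x y)
      - aα t x y * qα t x y - 3*(aα t x y * qαβ t x y + aαβ t x y * qα t x y)
      - 12*(aαβ t x y * qαβ t x y) =
    13*(fαβ t x + fαβ t y) := by
  simp only [aOne, aβ, aα, aαβ, qOne, qβ, qα, qαβ, fαβ]
  ring

/-- The divisibility cleared of the denominator `13`, with the quotient given by its coordinates. -/
theorem factor_mul_quotient {β α : R} (hβ : β^2 - 5*β + 3 = 0)
    (hα : α^2 + (β - 2)*α + β = 0) (t x y : R) :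
    comb β α (aOne t x y) (aβ t x y) (aα t x y) (aαβ t x y)
        * comb β α (qOne t x y) (qβ t x y) (qα t x y) (qαβ t x y) =
      x^13 - y^13 + 13 *
        (comb β α (fOne t x) (fβ t x) (fα t x) (fαβ t x)
          - comb β (2 - β - α) (fOne t y) (fβ t y) (fα t y) (fαβ t y)) := by
  rw [comb_mul_comb hβ hα, comb_conj hβ]
  unfold comb
  linear_combination coord_one t x y + β * coord_β t x y + α * coord_α t x y
    + α * β * coord_αβ t x y

/-! ### Transfer to polynomials over `K` -/

variable {K : Type*} [Field K]

open MvPolynomial in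
theorem A₁₃_eq_comb (β α t : K) :
    A₁₃ β α t = comb (C β) (C α) (aOne (C t) (X 0) (X 1)) (aβ (C t) (X 0) (X 1))
      (aα (C t) (X 0) (X 1)) (aαβ (C t) (X 0) (X 1)) := by
  simp only [A₁₃, comb, aOne, aβ, aα, aαβ, map_add, map_sub, map_mul, map_pow, map_ofNat]
  ring

open MvPolynomial in
theorem aeval_f₁₃_eq_comb (β α t : K) (x : MvPolynomial (Fin 2) K) :
    Polynomial.aeval x (f₁₃ β α t) = C (1/13) * x^13 +
      comb (C β) (C α) (fOne (C t) x) (fβ (C t) x) (fα (C t) x) (fαβ (C t) x) := by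
  simp only [f₁₃, comb, fOne, fβ, fα, fαβ, map_add, map_sub, map_mul, map_pow, map_neg,
    Polynomial.aeval_C, Polynomial.aeval_X, MvPolynomial.algebraMap_eq, map_ofNat]
  ring

theorem map_f₁₃ {β α t : K} {σ : K →+* K} (hσβ : σ β = β) (hσα : σ α = 2 - β - α)
    (ht : σ t = t) : (f₁₃ β α t).map σ = f₁₃ β (2 - β - α) t := by
  simp only [f₁₃, Polynomial.map_add, Polynomial.map_mul, Polynomial.map_pow, Polynomial.map_C,
    Polynomial.map_X]
  simp only [map_add, map_sub, map_mul, map_pow, map_neg, map_div₀, map_one, map_ofNat,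
    hσβ, hσα, ht]

open MvPolynomial in
theorem A₁₃_dvd [CharZero K] {β α t : K} {σ : K →+* K} (hβ : β^2 - 5*β + 3 = 0)
    (hα : α^2 + (β - 2)*α + β = 0) (hσβ : σ β = β) (hσα : σ α = 2 - β - α) (ht : σ t = t) :
    A₁₃ β α t ∣
      Polynomial.aeval (X 0 : MvPolynomial (Fin 2) K) (f₁₃ β α t)
        - Polynomial.aeval (X 1 : MvPolynomial (Fin 2) K) ((f₁₃ β α t).map σ) := by
  have hβ' : (C β : MvPolynomial (Fin 2) K)^2 - 5 * C β + 3 = 0 := by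
    simpa only [map_add, map_sub, map_mul, map_pow, map_ofNat, map_zero]
      using congrArg (C (σ := Fin 2)) hβ
  have hα' : (C α : MvPolynomial (Fin 2) K)^2 + (C β - 2) * C α + C β = 0 := by
    simpa only [map_add, map_sub, map_mul, map_pow, map_ofNat, map_zero]
      using congrArg (C (σ := Fin 2)) hα
  have h13 : (C (1/13) : MvPolynomial (Fin 2) K) * 13 = 1 := by
    rw [← map_ofNat (C (σ := Fin 2)) 13, ← map_mul, one_div, inv_mul_cancel₀ (by norm_num), map_one]
  refine ⟨C (1/13) * comb (C β) (C α) (qOne (C t) (X 0) (X 1)) (qβ (C t) (X 0) (X 1))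
    (qα (C t) (X 0) (X 1)) (qαβ (C t) (X 0) (X 1)), ?_⟩
  rw [map_f₁₃ hσβ hσα ht, aeval_f₁₃_eq_comb, aeval_f₁₃_eq_comb, A₁₃_eq_comb]
  simp only [map_sub, map_ofNat]
  have h := factor_mul_quotient hβ' hα' (C t) (X 0) (X 1)
  set g := comb (C β) (2 - C β - C α) (fOne (C t) (X 1)) (fβ (C t) (X 1)) (fα (C t) (X 1))
    (fαβ (C t) (X 1) : MvPolynomial (Fin 2) K)
  set f := comb (C β) (C α) (fOne (C t) (X 0)) (fβ (C t) (X 0)) (fα (C t) (X 0))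
    (fαβ (C t) (X 0) : MvPolynomial (Fin 2) K)
  linear_combination (-C (1/13)) * h - (f - g) * h13

open MvPolynomial in
theorem rename_swap_A₁₃ {β α t : K} {σ : K →+* K} (hσβ : σ β = β) (hσα : σ α = 2 - β - α)
    (ht : σ t = t) (hβ : β^2 - 5*β + 3 = 0) :
    rename (Equiv.swap (0 : Fin 2) 1) (A₁₃ β α t) = map σ (A₁₃ β α t) := by
  have hβ' : (C β : MvPolynomial (Fin 2) K)^2 - 5 * C β + 3 = 0 := by
    simpa only [map_add, map_sub, map_mul, map_pow, map_ofNat, map_zero]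
      using congrArg (C (σ := Fin 2)) hβ
  simp only [A₁₃, map_add, map_sub, map_mul, map_pow, map_ofNat, rename_C, rename_X, map_C,
    map_X, Equiv.swap_apply_left, Equiv.swap_apply_right, hσβ, hσα, ht]
  linear_combination (X 0 * X 1 ^ 3 - X 0 ^ 3 * X 1 + 51 * C t * X 0 ^ 2 - 51 * C t * X 1 ^ 2
    + 15 * C t * X 0 - 15 * C t * X 1) * hβ'

end Cofactor

/-- `A₁₃` divides `f₁₃(x₁) − f₁₃^σ(x₂)` in `K[x₁,x₂]`, and moreover
`A₁₃(x₂,x₁) = A₁₃^σ(x₁,x₂)`. -/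
theorem A₁₃_dvd_and_swap
    {K : Type*} [Field K] [CharZero K] (β α t : K) (σ : K →+* K)
    (hβ : β^2 - 5*β + 3 = 0) (hα : α^2 + (β - 2)*α + β = 0)
    (hσβ : σ β = β) (hσα : σ α = 2 - β - α) (ht : σ t = t) :
    (A₁₃ β α t ∣
        Polynomial.aeval (MvPolynomial.X 0 : MvPolynomial (Fin 2) K) (f₁₃ β α t)
          - Polynomial.aeval (MvPolynomial.X 1 : MvPolynomial (Fin 2) K) ((f₁₃ β α t).map σ))
      ∧ MvPolynomial.rename (Equiv.swap (0 : Fin 2) 1) (A₁₃ β α t)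
          = MvPolynomial.map σ (A₁₃ β α t) := by
  exact ⟨Cofactor.A₁₃_dvd hβ hα hσβ hσα ht, Cofactor.rename_swap_A₁₃ hσβ hσα ht hβ⟩
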